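/- Let σ > 0 and T > 0. Assume each X_i is divergence-free and δ-homogeneous of degree one. Let b : [0,T]×ℝ^d → ℝ^m be bounded and continuous with b(t,·) ∈ C¹(ℝ^d, ℝ^m) for each t. Let ρ : [0,T]×ℝ^d → [0,∞) be continuous and bounded, C¹ in t and C² in x on (0,T)×ℝ^d with these derivatives continuous, satisfying ∂_t ρ = σ Δ_G ρ + div_G(b(t,·) ρ(t,·)) pointwise on (0,T)×ℝ^d, and such that ∫_{ℝ^d} ρ(t,x) dx = 1 for every t ∈ [0,T]. Let φ : ℝ^d → ℝ with ‖φ‖_∞ ≤ 1 and suppose there is a family (φ_ε)_{ε ∈ (0,1]} with φ_ε ∈ C²(ℝ^d) bounded, ‖φ − φ_ε‖_∞ ≤ ε, |∇_G φ_ε(x)| ≤ 1 and |Δ_G φ_ε(x)| ≤ 1/ε for all x (such a family is produced by group mollification of any φ with ‖φ‖_{C^{0,1}_G} ≤ 1). Then there is a constant C, depending only on σ, T and the supremum norm of b, such that |∫_{ℝ^d} φ(x) ρ(t,x) dx − ∫_{ℝ^d} φ(x) ρ(s,x) dx| ≤ C |t − s|^{1/2} for all s, t ∈ [0,T]. (This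 gives the Hölder estimate d₀(ρ_t, ρ_s) ≤ C|t−s|^{1/2} in the flat Fortet–Mourier metric.) -/

import Mathlib

open MeasureTheory Set

noncomputable section

/-- Derivative of `f : ℝ^d → ℝ` along the vector field `X` (horizontal derivative `X f`). -/
def vderiv {d : ℕ} (X : (Fin d → ℝ) → (Fin d → ℝ)) (f : (Fin d → ℝ) → ℝ)
    (x : Fin d → ℝ) : ℝ := fderiv ℝ f x (X x)

/-- Squared Euclidean norm of the horizontal gradient `∇_G f`. -/
def hgradSq {d m : ℕ} (X : Fin m → (Fin d → ℝ) → (Fin d → ℝ)) (f : (Fin d → ℝ) → ℝ)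
    (x : Fin d → ℝ) : ℝ := ∑ i, (vderiv (X i) f x) ^ 2

/-- Horizontal Laplacian `Δ_G f = Σ X_i (X_i f)`. -/
def hLap {d m : ℕ} (X : Fin m → (Fin d → ℝ) → (Fin d → ℝ)) (f : (Fin d → ℝ) → ℝ)
    (x : Fin d → ℝ) : ℝ := ∑ i, vderiv (X i) (vderiv (X i) f) x

/-- Horizontal divergence `div_G B = Σ X_i B_i`. -/
def hdiv {d m : ℕ} (X : Fin m → (Fin d → ℝ) → (Fin d → ℝ)) (B : (Fin d → ℝ) → Fin m → ℝ)
    (x : Fin d → ℝ) : ℝ := ∑ i, vderiv (X i) (fun y => B y i) x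

/-- Euclidean divergence `Σ_j ∂_{x_j} X^j` of a vector field on `ℝ^d`. -/
def ediv {d : ℕ} (X : (Fin d → ℝ) → (Fin d → ℝ)) (x : Fin d → ℝ) : ℝ :=
  ∑ j, fderiv ℝ X x (Pi.single j 1) j

/-- Anisotropic dilations `δ_λ x = (λ^{w_1} x_1, …, λ^{w_d} x_d)`. -/
def dil {d : ℕ} (w : Fin d → ℕ) (l : ℝ) (x : Fin d → ℝ) : Fin d → ℝ :=
  fun i => l ^ (w i) * x i

/-- A vector field is `δ`-homogeneous of degree one. -/
def homogOne {d : ℕ} (w : Fin d → ℕ) (X : (Fin d → ℝ) → (Fin d → ℝ)) : Prop :=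
  ∀ l : ℝ, 0 < l → ∀ x, fderiv ℝ (dil w l) x (X x) = l • X (dil w l x)

/-! Tested against a compactly supported `C²` function `ψ`, the equation becomes
`d/dt ∫ ψ ρ = ∫ (σ Δ_G ψ - b · ∇_G ψ) ρ`, because divergence-free fields are skew-adjoint; so
`t ↦ ∫ ψ ρ_t` is Lipschitz with constant `sup |σ Δ_G ψ - b · ∇_G ψ|`. Dilating a bump function
by `δ_λ` multiplies its horizontal derivatives by powers of `λ`, and letting `λ → 0` removes the
compact support. The mollification `φ_ε` thus has Lipschitz constant at most `σ / ε + m ‖b‖_∞` and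
costs an error `2 ε`; taking `ε` of order `|t - s|^{1/2}` balances the two. -/

open Filter Topology

section AbsoluteValues

variable {R : Type*} [Ring R] [LinearOrder R] [IsOrderedRing R]

lemma abs_mul_le_of_le {a b A B : R} (ha : |a| ≤ A) (hb : |b| ≤ B) : |a * b| ≤ A * B :=
  (abs_mul a b).trans_le (mul_le_mul ha hb (abs_nonneg b) ((abs_nonneg a).trans ha))

lemma abs_sum_le_card_mul {ι : Type*} [Fintype ι] {a : ι → R} {c : R} (h : ∀ i, |a i| ≤ c) :
    |∑ i, a i| ≤ Fintype.card ι * c :=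
  (Finset.abs_sum_le_sum_abs _ _).trans <| (Finset.sum_le_sum fun i _ => h i).trans_eq (by simp)

end AbsoluteValues

section DivergenceTheorem

lemma integral_fderiv_eq_zero {E F : Type*} [NormedAddCommGroup E] [NormedSpace ℝ E]
    [FiniteDimensional ℝ E] [MeasurableSpace E] [BorelSpace E] {μ : Measure E} [μ.IsAddHaarMeasure]
    [NormedAddCommGroup F] [NormedSpace ℝ F] {f : E → F} (hf : ContDiff ℝ 1 f)
    (hc : HasCompactSupport f) (v : E) : ∫ x, fderiv ℝ f x v ∂μ = 0 := by
  have hint : Integrable (fun x => fderiv ℝ f x v) μ :=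
    ((hf.continuous_fderiv one_ne_zero).clm_apply
      continuous_const).integrable_of_hasCompactSupport (hc.fderiv_apply ℝ v)
  simpa using integral_smul_fderiv_eq_neg_fderiv_smul_of_integrable (μ := μ) (v := v)
    (f := fun _ : E => (1 : ℝ)) (g := f) (by simp) (by simpa using hint)
    (by simpa using hf.continuous.integrable_of_hasCompactSupport hc)
    (by fun_prop) (fun x _ => hf.differentiable one_ne_zero x)

variable {d : ℕ} {X : (Fin d → ℝ) → (Fin d → ℝ)} {f : (Fin d → ℝ) → ℝ}

lemma integral_ediv_eq_zero (hX : ContDiff ℝ 1 X) (hc : HasCompactSupport X) :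
    ∫ x, ediv X x = 0 := by
  have hint (j : Fin d) : Integrable (fun x => fderiv ℝ X x (Pi.single j 1)) :=
    ((hX.continuous_fderiv one_ne_zero).clm_apply
      continuous_const).integrable_of_hasCompactSupport (hc.fderiv_apply ℝ _)
  unfold ediv
  rw [integral_finsetSum _ fun j _ => (hint j).eval j]
  refine Finset.sum_eq_zero fun j _ => ?_
  rw [← eval_integral fun i => (hint j).eval i, integral_fderiv_eq_zero hX hc, Pi.zero_apply]

lemma ediv_smul {x : Fin d → ℝ} (hf : DifferentiableAt ℝ f x) (hX : DifferentiableAt ℝ X x) :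
    ediv (fun y => f y • X y) x = f x * ediv X x + vderiv X f x := by
  have hsum : fderiv ℝ f x (X x) = ∑ j, fderiv ℝ f x (Pi.single j 1) * X x j := by
    conv_lhs => rw [pi_eq_sum_univ' (X x), map_sum]
    simp [mul_comm]
  simp only [ediv, vderiv, fderiv_fun_smul hf hX, hsum, Finset.mul_sum, ← Finset.sum_add_distrib]
  simp

end DivergenceTheorem

section HorizontalCalculus

variable {d : ℕ} {X : (Fin d → ℝ) → (Fin d → ℝ)} {f g : (Fin d → ℝ) → ℝ}

lemma contDiff_vderiv {n k : WithTop ℕ∞} (hX : ContDiff ℝ n X) (hf : ContDiff ℝ k f)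
    (hnk : n + 1 ≤ k) : ContDiff ℝ n (vderiv X f) :=
  (hf.fderiv_right hnk).clm_apply hX

lemma continuous_vderiv (hX : Continuous X) (hf : ContDiff ℝ 1 f) : Continuous (vderiv X f) :=
  (hf.continuous_fderiv one_ne_zero).clm_apply hX

lemma hasCompactSupport_vderiv (hf : HasCompactSupport f) : HasCompactSupport (vderiv X f) :=
  (hf.fderiv ℝ).mono fun x hx h => hx (by simp [vderiv, h])

lemma vderiv_const_mul {x : Fin d → ℝ} (hf : DifferentiableAt ℝ f x) (c : ℝ) :
    vderiv X (fun y => c * f y) x = c * vderiv X f x := by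
  simp [vderiv, fderiv_const_mul hf]

lemma vderiv_add {x : Fin d → ℝ} (hf : DifferentiableAt ℝ f x) (hg : DifferentiableAt ℝ g x) :
    vderiv X (fun y => f y + g y) x = vderiv X f x + vderiv X g x := by
  simp [vderiv, fderiv_fun_add hf hg]

lemma vderiv_mul {x : Fin d → ℝ} (hf : DifferentiableAt ℝ f x) (hg : DifferentiableAt ℝ g x) :
    vderiv X (fun y => f y * g y) x = f x * vderiv X g x + g x * vderiv X f x := by
  simp [vderiv, fderiv_fun_mul hf hg]

lemma vderiv_vderiv_mul (hX : ContDiff ℝ 1 X) (hf : ContDiff ℝ 2 f) (hg : ContDiff ℝ 2 g)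
    (x : Fin d → ℝ) :
    vderiv X (vderiv X fun y => f y * g y) x =
      f x * vderiv X (vderiv X g) x + g x * vderiv X (vderiv X f) x
        + 2 * (vderiv X f x * vderiv X g x) := by
  have df : Differentiable ℝ f := hf.differentiable two_ne_zero
  have dg : Differentiable ℝ g := hg.differentiable two_ne_zero
  have dXf : Differentiable ℝ (vderiv X f) :=
    (contDiff_vderiv hX hf one_add_one_eq_two.le).differentiable one_ne_zero
  have dXg : Differentiable ℝ (vderiv X g) :=
    (contDiff_vderiv hX hg one_add_one_eq_two.le).differentiable one_ne_zero
  have hXfg : vderiv X (fun y => f y * g y) =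
      fun y => f y * vderiv X g y + g y * vderiv X f y := funext fun y => vderiv_mul (df y) (dg y)
  rw [hXfg, vderiv_add ((df x).fun_mul (dXg x))
    ((dg x).fun_mul (dXf x)), vderiv_mul (df x) (dXg x), vderiv_mul (dg x) (dXf x)]
  ring

lemma abs_vderiv_le_sqrt_hgradSq {m : ℕ} (X : Fin m → (Fin d → ℝ) → (Fin d → ℝ))
    (f : (Fin d → ℝ) → ℝ) (x : Fin d → ℝ) (i : Fin m) :
    |vderiv (X i) f x| ≤ √(hgradSq X f x) :=
  Real.abs_le_sqrt <| Finset.single_le_sum (f := fun i => vderiv (X i) f x ^ 2)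
    (fun _ _ => sq_nonneg _) (Finset.mem_univ i)

lemma integral_vderiv_eq_zero (hX : ContDiff ℝ 1 X) (hXdiv : ∀ x, ediv X x = 0)
    (hf : ContDiff ℝ 1 f) (hc : HasCompactSupport f) : ∫ x, vderiv X f x = 0 := by
  have h : ∫ x, ediv (fun y => f y • X y) x = 0 :=
    integral_ediv_eq_zero (hf.smul hX) hc.smul_right
  simpa only [ediv_smul (hf.differentiable one_ne_zero _) (hX.differentiable one_ne_zero _), hXdiv,
    mul_zero, zero_add] using h

lemma integrable_mul_of_hasCompactSupport (hf : Continuous f) (hg : Continuous g)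
    (hc : HasCompactSupport f) : Integrable fun x => f x * g x :=
  (hf.mul hg).integrable_of_hasCompactSupport hc.mul_right

lemma integrable_vderiv_mul (hX : Continuous X) (hf : ContDiff ℝ 1 f) (hg : Continuous g)
    (hc : HasCompactSupport f) : Integrable fun x => vderiv X f x * g x :=
  integrable_mul_of_hasCompactSupport (continuous_vderiv hX hf) hg (hasCompactSupport_vderiv hc)

lemma integral_mul_vderiv_eq_neg (hX : ContDiff ℝ 1 X) (hXdiv : ∀ x, ediv X x = 0)
    (hf : ContDiff ℝ 1 f) (hg : ContDiff ℝ 1 g) (hc : HasCompactSupport f) :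
    ∫ x, f x * vderiv X g x = -∫ x, vderiv X f x * g x := by
  have h := integral_vderiv_eq_zero hX hXdiv (hf.mul hg) hc.mul_right
  simp only [vderiv_mul (hf.differentiable one_ne_zero _) (hg.differentiable one_ne_zero _),
    mul_comm (g _)] at h
  rw [integral_add (integrable_mul_of_hasCompactSupport hf.continuous
      (continuous_vderiv hX.continuous hg) hc)
    (integrable_vderiv_mul hX.continuous hf hg.continuous hc)] at h
  exact eq_neg_of_add_eq_zero_left h

lemma integral_mul_vderiv_vderiv (hX : ContDiff ℝ 1 X) (hXdiv : ∀ x, ediv X x = 0)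
    (hf : ContDiff ℝ 2 f) (hg : ContDiff ℝ 2 g) (hc : HasCompactSupport f) :
    ∫ x, f x * vderiv X (vderiv X g) x = ∫ x, vderiv X (vderiv X f) x * g x := by
  rw [integral_mul_vderiv_eq_neg hX hXdiv (hf.of_le one_le_two)
      (contDiff_vderiv hX hg one_add_one_eq_two.le) hc,
    integral_mul_vderiv_eq_neg hX hXdiv (contDiff_vderiv hX hf one_add_one_eq_two.le)
      (hg.of_le one_le_two) (hasCompactSupport_vderiv hc), neg_neg]

end HorizontalCalculus

section Duality

variable {d m : ℕ} {X : Fin m → (Fin d → ℝ) → (Fin d → ℝ)} {f g : (Fin d → ℝ) → ℝ}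

lemma integrable_hLap_mul (hX : ∀ i, ContDiff ℝ 1 (X i)) (hf : ContDiff ℝ 2 f)
    (hg : Continuous g) (hc : HasCompactSupport f) : Integrable fun x => hLap X f x * g x := by
  simp only [hLap, Finset.sum_mul]
  exact integrable_finsetSum _ fun i _ => integrable_vderiv_mul (hX i).continuous
    (contDiff_vderiv (hX i) hf one_add_one_eq_two.le) hg (hasCompactSupport_vderiv hc)

lemma integral_mul_hLap (hX : ∀ i, ContDiff ℝ 1 (X i)) (hXdiv : ∀ i x, ediv (X i) x = 0)
    (hf : ContDiff ℝ 2 f) (hg : ContDiff ℝ 2 g) (hc : HasCompactSupport f) :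
    ∫ x, f x * hLap X g x = ∫ x, hLap X f x * g x := by
  simp only [hLap, Finset.mul_sum, Finset.sum_mul]
  rw [integral_finsetSum, integral_finsetSum]
  · exact Finset.sum_congr rfl fun i _ => integral_mul_vderiv_vderiv (hX i) (hXdiv i) hf hg hc
  · exact fun i _ => integrable_vderiv_mul (hX i).continuous
      (contDiff_vderiv (hX i) hf one_add_one_eq_two.le) hg.continuous (hasCompactSupport_vderiv hc)
  · exact fun i _ => integrable_mul_of_hasCompactSupport hf.continuous
      (continuous_vderiv (hX i).continuous (contDiff_vderiv (hX i) hg one_add_one_eq_two.le)) hc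

lemma integral_mul_hdiv (hX : ∀ i, ContDiff ℝ 1 (X i)) (hXdiv : ∀ i x, ediv (X i) x = 0)
    {B : (Fin d → ℝ) → Fin m → ℝ} (hf : ContDiff ℝ 1 f) (hB : ∀ i, ContDiff ℝ 1 fun y => B y i)
    (hc : HasCompactSupport f) :
    ∫ x, f x * hdiv X B x = -∫ x, ∑ i, vderiv (X i) f x * B x i := by
  simp only [hdiv, Finset.mul_sum]
  rw [integral_finsetSum, integral_finsetSum, ← Finset.sum_neg_distrib]
  · exact Finset.sum_congr rfl fun i _ => integral_mul_vderiv_eq_neg (hX i) (hXdiv i) hf (hB i) hc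
  · exact fun i _ => integrable_vderiv_mul (hX i).continuous hf (hB i).continuous hc
  · exact fun i _ => integrable_mul_of_hasCompactSupport hf.continuous
      (continuous_vderiv (hX i).continuous (hB i)) hc

/-- The Fokker–Planck operator `r ↦ σ Δ_G r + div_G (b r)`, acting on densities. -/
def fokkerPlanckOp (X : Fin m → (Fin d → ℝ) → (Fin d → ℝ)) (σ : ℝ) (b : (Fin d → ℝ) → Fin m → ℝ)
    (r : (Fin d → ℝ) → ℝ) (x : Fin d → ℝ) : ℝ :=
  σ * hLap X r x + hdiv X (fun y i => b y i * r y) x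

/-- The Kolmogorov operator `f ↦ σ Δ_G f - b · ∇_G f`, the formal adjoint of `fokkerPlanckOp` when
the fields are divergence-free. -/
def kolmogorovOp (X : Fin m → (Fin d → ℝ) → (Fin d → ℝ)) (σ : ℝ) (b : (Fin d → ℝ) → Fin m → ℝ)
    (f : (Fin d → ℝ) → ℝ) (x : Fin d → ℝ) : ℝ :=
  σ * hLap X f x - ∑ i, b x i * vderiv (X i) f x

variable {σ : ℝ} {b : (Fin d → ℝ) → Fin m → ℝ}

lemma integral_mul_fokkerPlanckOp (hX : ∀ i, ContDiff ℝ 1 (X i))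
    (hXdiv : ∀ i x, ediv (X i) x = 0) {r : (Fin d → ℝ) → ℝ} (hf : ContDiff ℝ 2 f)
    (hr : ContDiff ℝ 2 r) (hbr : ∀ i, ContDiff ℝ 1 fun y => b y i * r y)
    (hc : HasCompactSupport f) :
    ∫ x, f x * fokkerPlanckOp X σ b r x = ∫ x, kolmogorovOp X σ b f x * r x := by
  have hf1 : ContDiff ℝ 1 f := hf.of_le one_le_two
  have hΔr : Continuous (hLap X r) := continuous_finsetSum _ fun i _ =>
    continuous_vderiv (hX i).continuous (contDiff_vderiv (hX i) hr one_add_one_eq_two.le)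
  have hdivbr : Continuous (hdiv X fun y i => b y i * r y) :=
    continuous_finsetSum _ fun i _ => continuous_vderiv (hX i).continuous (hbr i)
  calc ∫ x, f x * fokkerPlanckOp X σ b r x
      = ∫ x, (σ * (f x * hLap X r x) + f x * hdiv X (fun y i => b y i * r y) x) := by
        simp only [fokkerPlanckOp, mul_add, mul_left_comm σ]
    _ = σ * (∫ x, hLap X f x * r x) - ∫ x, ∑ i, vderiv (X i) f x * (b x i * r x) := by
        rw [integral_add, integral_const_mul, integral_mul_hLap hX hXdiv hf hr hc,
          integral_mul_hdiv hX hXdiv hf1 hbr hc, sub_eq_add_neg]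
        · exact (integrable_mul_of_hasCompactSupport hf.continuous hΔr hc).const_mul σ
        · exact integrable_mul_of_hasCompactSupport hf.continuous hdivbr hc
    _ = ∫ x, (σ * (hLap X f x * r x) - ∑ i, vderiv (X i) f x * (b x i * r x)) := by
        rw [integral_sub, integral_const_mul]
        · exact (integrable_hLap_mul hX hf hr.continuous hc).const_mul σ
        · exact integrable_finsetSum _ fun i _ =>
            integrable_vderiv_mul (hX i).continuous hf1 (hbr i).continuous hc
    _ = ∫ x, kolmogorovOp X σ b f x * r x := by
        simp only [kolmogorovOp, sub_mul, Finset.sum_mul, mul_assoc, mul_left_comm (b _ _)]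

lemma kolmogorovOp_mul (hX : ∀ i, ContDiff ℝ 1 (X i)) (hf : ContDiff ℝ 2 f)
    (hg : ContDiff ℝ 2 g) (x : Fin d → ℝ) :
    kolmogorovOp X σ b (fun y => f y * g y) x =
      f x * kolmogorovOp X σ b g x + g x * kolmogorovOp X σ b f x
        + 2 * σ * ∑ i, vderiv (X i) f x * vderiv (X i) g x := by
  simp only [kolmogorovOp, hLap, vderiv_vderiv_mul (hX _) hf hg,
    vderiv_mul (hf.differentiable two_ne_zero x) (hg.differentiable two_ne_zero x),
    Finset.mul_sum, mul_sub, ← Finset.sum_add_distrib, ← Finset.sum_sub_distrib]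
  exact Finset.sum_congr rfl fun i _ => by ring

lemma abs_kolmogorovOp_le_add (hσ : 0 ≤ σ) {x : Fin d → ℝ} {A G M : ℝ} (hΔ : |hLap X f x| ≤ A)
    (hG : ∀ i, |vderiv (X i) f x| ≤ G) (hb : ∀ i, |b x i| ≤ M) :
    |kolmogorovOp X σ b f x| ≤ σ * A + m * (M * G) := by
  have hdrift : |∑ i, b x i * vderiv (X i) f x| ≤ m * (M * G) := by
    simpa using abs_sum_le_card_mul fun i => abs_mul_le_of_le (hb i) (hG i)
  refine (abs_sub _ _).trans (add_le_add ?_ hdrift)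
  rw [abs_mul, abs_of_nonneg hσ]
  exact mul_le_mul_of_nonneg_left hΔ hσ

end Duality

section Cutoff

variable {d m : ℕ} {w : Fin d → ℕ} {X : Fin m → (Fin d → ℝ) → (Fin d → ℝ)}

/-- A sequence of compactly supported `C²` cutoffs tending to `1` pointwise, whose horizontal
derivatives `X_i χ` and `X_i (X_i χ)` are uniformly bounded by `η n → 0`. They reduce bounded
test functions to compactly supported ones. -/
structure IsHorizontalCutoff (X : Fin m → (Fin d → ℝ) → (Fin d → ℝ))
    (χ : ℕ → (Fin d → ℝ) → ℝ) (η : ℕ → ℝ) : Prop where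
  contDiff (n : ℕ) : ContDiff ℝ 2 (χ n)
  hasCompactSupport (n : ℕ) : HasCompactSupport (χ n)
  abs_le_one (n : ℕ) (x : Fin d → ℝ) : |χ n x| ≤ 1
  tendsto_one (x : Fin d → ℝ) : Tendsto (fun n => χ n x) atTop (𝓝 1)
  abs_vderiv_le (n : ℕ) (i : Fin m) (x : Fin d → ℝ) : |vderiv (X i) (χ n) x| ≤ η n
  abs_vderiv_vderiv_le (n : ℕ) (i : Fin m) (x : Fin d → ℝ) :
    |vderiv (X i) (vderiv (X i) (χ n)) x| ≤ η n
  tendsto_zero : Tendsto η atTop (𝓝 0)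

lemma contDiff_dil (w : Fin d → ℕ) (l : ℝ) {n : WithTop ℕ∞} : ContDiff ℝ n (dil w l) := by
  unfold dil
  fun_prop

lemma dil_zero (hw : ∀ i, 0 < w i) (x : Fin d → ℝ) : dil w 0 x = 0 :=
  funext fun i => by simp [dil, (hw i).ne']

lemma dil_inv_dil {l : ℝ} (hl : l ≠ 0) (x : Fin d → ℝ) : dil w l⁻¹ (dil w l x) = x :=
  funext fun i => by simp [dil, hl]

lemma hasCompactSupport_comp_dil {f : (Fin d → ℝ) → ℝ} (hf : HasCompactSupport f) {l : ℝ}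
    (hl : l ≠ 0) : HasCompactSupport fun x => f (dil w l x) :=
  hf.comp_homeomorph
    { toFun := dil w l
      invFun := dil w l⁻¹
      left_inv := dil_inv_dil hl
      right_inv := fun x => by simpa using dil_inv_dil (w := w) (inv_ne_zero hl) x
      continuous_toFun := (contDiff_dil w l (n := 0)).continuous
      continuous_invFun := (contDiff_dil w l⁻¹ (n := 0)).continuous }

lemma vderiv_comp_dil {Y : (Fin d → ℝ) → (Fin d → ℝ)} (hY : homogOne w Y)
    {f : (Fin d → ℝ) → ℝ} (hf : Differentiable ℝ f) {l : ℝ} (hl : 0 < l) :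
    vderiv Y (fun x => f (dil w l x)) = fun x => l * vderiv Y f (dil w l x) := by
  ext x
  have hcomp := fderiv_comp x (hf (dil w l x))
    ((contDiff_dil w l (n := 1)).differentiable one_ne_zero x)
  simp [vderiv, ← Function.comp_def f, hcomp, hY l hl x]

lemma vderiv_vderiv_comp_dil {Y : (Fin d → ℝ) → (Fin d → ℝ)} (hY : homogOne w Y)
    {f : (Fin d → ℝ) → ℝ} (hf : Differentiable ℝ f) (hYf : Differentiable ℝ (vderiv Y f))
    {l : ℝ} (hl : 0 < l) (x : Fin d → ℝ) :
    vderiv Y (vderiv Y fun x => f (dil w l x)) x = l * (l * vderiv Y (vderiv Y f) (dil w l x)) := by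
  have hcomp : Differentiable ℝ fun y => vderiv Y f (dil w l y) :=
    hYf.comp ((contDiff_dil w l (n := 1)).differentiable one_ne_zero)
  rw [vderiv_comp_dil hY hf hl, vderiv_const_mul (hcomp x), vderiv_comp_dil hY hYf hl]

lemma exists_abs_vderiv_le (hX : ∀ i, ContDiff ℝ 1 (X i)) {f : (Fin d → ℝ) → ℝ}
    (hf : ContDiff ℝ 2 f) (hc : HasCompactSupport f) :
    ∃ K, ∀ i x, |vderiv (X i) f x| ≤ K ∧ |vderiv (X i) (vderiv (X i) f) x| ≤ K := by
  choose K hK using fun i => (continuous_vderiv (hX i).continuous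
    (hf.of_le one_le_two)).bounded_above_of_compact_support (hasCompactSupport_vderiv hc)
  choose K' hK' using fun i => (continuous_vderiv (hX i).continuous
    (contDiff_vderiv (hX i) hf one_add_one_eq_two.le)).bounded_above_of_compact_support
      (hasCompactSupport_vderiv (hasCompactSupport_vderiv hc))
  obtain ⟨C, hC⟩ := Finite.exists_le fun i => max (K i) (K' i)
  exact ⟨C, fun i x => ⟨(hK i x).trans ((le_max_left _ _).trans (hC i)),
    (hK' i x).trans ((le_max_right _ _).trans (hC i))⟩⟩

lemma exists_isHorizontalCutoff (hw : ∀ i, 0 < w i) (hX : ∀ i, ContDiff ℝ 1 (X i))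
    (hXhom : ∀ i, homogOne w (X i)) : ∃ χ η, IsHorizontalCutoff X χ η := by
  let B : ContDiffBump (0 : Fin d → ℝ) := ⟨1, 2, one_pos, one_lt_two⟩
  obtain ⟨K, hK⟩ := exists_abs_vderiv_le hX B.contDiff B.hasCompactSupport
  have hB : Differentiable ℝ B := (B.contDiff (n := 1)).differentiable one_ne_zero
  have hXB (i : Fin m) : Differentiable ℝ (vderiv (X i) B) :=
    (contDiff_vderiv (hX i) B.contDiff le_rfl).differentiable one_ne_zero
  let l (n : ℕ) : ℝ := 1 / ((n : ℝ) + 1)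
  have hl (n : ℕ) : 0 < l n := Nat.one_div_pos_of_nat
  have hl1 (n : ℕ) : l n ≤ 1 :=
    div_le_one_of_le₀ (by simp) (by positivity)
  have hl0 : Tendsto l atTop (𝓝 0) := tendsto_one_div_add_atTop_nhds_zero_nat
  refine ⟨fun n x => B (dil w (l n) x), fun n => l n * K,
    fun n => B.contDiff.comp (contDiff_dil w _),
    fun n => hasCompactSupport_comp_dil B.hasCompactSupport (hl n).ne',
    fun n x => (abs_of_nonneg B.nonneg).trans_le B.le_one, fun x => ?_, fun n i x => ?_,
    fun n i x => ?_, by simpa using hl0.mul_const K⟩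
  · have hcont : Continuous fun l : ℝ => B (dil w l x) :=
      B.continuous.comp (by unfold dil; fun_prop)
    have hB0 : B (dil w 0 x) = 1 := by
      rw [dil_zero hw]
      exact B.one_of_mem_closedBall (Metric.mem_closedBall_self zero_le_one)
    exact hB0 ▸ (hcont.tendsto 0).comp hl0
  · rw [vderiv_comp_dil (hXhom i) hB (hl n), abs_mul, abs_of_pos (hl n)]
    exact mul_le_mul_of_nonneg_left (hK i _).1 (hl n).le
  · rw [vderiv_vderiv_comp_dil (hXhom i) hB (hXB i) (hl n), abs_mul, abs_mul, abs_of_pos (hl n)]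
    exact mul_le_mul_of_nonneg_left
      ((mul_le_of_le_one_left (abs_nonneg _) (hl1 n)).trans (hK i _).2) (hl n).le

variable {χ : ℕ → (Fin d → ℝ) → ℝ} {η : ℕ → ℝ}

lemma IsHorizontalCutoff.tendsto_integral_mul (hχ : IsHorizontalCutoff X χ η)
    {f : (Fin d → ℝ) → ℝ} (hf : Integrable f) :
    Tendsto (fun n => ∫ x, χ n x * f x) atTop (𝓝 (∫ x, f x)) := by
  refine tendsto_integral_of_dominated_convergence (fun x => |f x|)
    (fun n => (hχ.contDiff n).continuous.aestronglyMeasurable.mul hf.aestronglyMeasurable)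
    hf.abs (fun n => ae_of_all _ fun x => ?_) (ae_of_all _ fun x => ?_)
  · rw [norm_mul]
    exact mul_le_of_le_one_left (abs_nonneg _) (hχ.abs_le_one n x)
  · simpa using (hχ.tendsto_one x).mul_const (f x)

lemma IsHorizontalCutoff.abs_kolmogorovOp_mul_le (hχ : IsHorizontalCutoff X χ η) (n : ℕ)
    (hX : ∀ i, ContDiff ℝ 1 (X i)) {σ : ℝ} (hσ : 0 ≤ σ) {b : (Fin d → ℝ) → Fin m → ℝ}
    {g : (Fin d → ℝ) → ℝ} (hg : ContDiff ℝ 2 g) {x : Fin d → ℝ} {D G K M : ℝ}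
    (hD : |kolmogorovOp X σ b g x| ≤ D) (hG : ∀ i, |vderiv (X i) g x| ≤ G) (hK : |g x| ≤ K)
    (hM : ∀ i, |b x i| ≤ M) :
    |kolmogorovOp X σ b (fun y => χ n y * g y) x| ≤
      D + η n * (K * (σ * m + m * M) + 2 * σ * (m * G)) := by
  have hΔχ : |hLap X (χ n) x| ≤ m * η n := by
    simpa [hLap] using abs_sum_le_card_mul fun i => hχ.abs_vderiv_vderiv_le n i x
  have hχg : |χ n x * kolmogorovOp X σ b g x| ≤ 1 * D := abs_mul_le_of_le (hχ.abs_le_one n x) hD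
  have hgχ : |g x * kolmogorovOp X σ b (χ n) x| ≤ K * (σ * (m * η n) + m * (M * η n)) :=
    abs_mul_le_of_le hK (abs_kolmogorovOp_le_add hσ hΔχ (hχ.abs_vderiv_le n · x) hM)
  have hΓ : |2 * σ * ∑ i, vderiv (X i) (χ n) x * vderiv (X i) g x| ≤ 2 * σ * (m * (η n * G)) := by
    rw [abs_mul, abs_of_nonneg (by positivity)]
    refine mul_le_mul_of_nonneg_left ?_ (by positivity)
    simpa using abs_sum_le_card_mul fun i => abs_mul_le_of_le (hχ.abs_vderiv_le n i x) (hG i)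
  rw [kolmogorovOp_mul hX (hχ.contDiff n) hg]
  calc _ ≤ 1 * D + K * (σ * (m * η n) + m * (M * η n)) + 2 * σ * (m * (η n * G)) :=
        (abs_add_three _ _ _).trans (add_le_add_three hχg hgχ hΓ)
    _ = D + η n * (K * (σ * m + m * M) + 2 * σ * (m * G)) := by ring

end Cutoff

section TimeDependence

lemma abs_integral_mul_le {α : Type*} [MeasurableSpace α] {μ : Measure α} {h r : α → ℝ} {D : ℝ}
    (hr : Integrable r μ) (hD : ∀ x, |h x| ≤ D) : |∫ x, h x * r x ∂μ| ≤ D * ∫ x, |r x| ∂μ := by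
  rw [← integral_const_mul]
  exact norm_integral_le_of_norm_le (f := fun x => h x * r x) (hr.abs.const_mul D)
    (ae_of_all _ fun x => abs_mul_le_of_le (hD x) le_rfl)

lemma hasDerivAt_integral_mul_of_hasCompactSupport {Y : Type*} [TopologicalSpace Y]
    [MeasurableSpace Y] [OpensMeasurableSpace Y] {μ : Measure Y} [IsFiniteMeasureOnCompacts μ]
    {u : ℝ → Y → ℝ} {U : Set ℝ} {ψ : Y → ℝ} {t : ℝ} (hU : IsOpen U) (ht : t ∈ U)
    (hu : ∀ s ∈ U, Continuous (u s)) (hdiff : ∀ y, ∀ s ∈ U, DifferentiableAt ℝ (u · y) s)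
    (hu' : ContinuousOn (fun p : ℝ × Y => deriv (u · p.2) p.1) (U ×ˢ univ))
    (hψ : Continuous ψ) (hc : HasCompactSupport ψ) :
    HasDerivAt (fun s => ∫ y, ψ y * u s y ∂μ) (∫ y, ψ y * deriv (u · y) t ∂μ) t := by
  obtain ⟨k, hk, htk, hkU⟩ := exists_compact_subset hU ht
  obtain ⟨M, hM⟩ := (hk.prod hc).exists_bound_of_continuousOn
    (hu'.mono (prod_mono hkU (subset_univ _)))
  have hψint : Integrable ψ μ := hψ.integrable_of_hasCompactSupport hc
  have hu't : Continuous fun y => deriv (u · y) t :=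
    hu'.comp_continuous (f := fun y => (t, y)) (by fun_prop) fun y => ⟨ht, mem_univ y⟩
  refine (hasDerivAt_integral_of_dominated_loc_of_deriv_le (bound := fun y => |ψ y| * M)
    (mem_interior_iff_mem_nhds.1 htk) ?_ ?_ (hψ.mul hu't).aestronglyMeasurable
    (ae_of_all _ fun y s hs => ?_) (hψint.abs.mul_const M)
    (ae_of_all _ fun y s hs => (hdiff y s (hkU hs)).hasDerivAt.const_mul (ψ y))).2
  · filter_upwards [hU.mem_nhds ht] with s hs
    exact (hψ.mul (hu s hs)).aestronglyMeasurable
  · exact (hψ.mul (hu t ht)).integrable_of_hasCompactSupport hc.mul_right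
  · by_cases hy : y ∈ tsupport ψ
    · exact abs_mul_le_of_le le_rfl (hM (s, y) ⟨hs, hy⟩)
    · simp [image_eq_zero_of_notMem_tsupport hy]

lemma abs_sub_le_of_hasDerivAt {f f' : ℝ → ℝ} {D s t : ℝ} (hst : s < t)
    (hf : ContinuousOn f (Icc s t)) (hf' : ∀ u ∈ Ioo s t, HasDerivAt f (f' u) u)
    (hD : ∀ u ∈ Ioo s t, |f' u| ≤ D) : |f t - f s| ≤ D * (t - s) := by
  obtain ⟨u, hu, huslope⟩ := exists_hasDerivAt_eq_slope f f' hst hf hf'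
  have h := hD u hu
  rwa [huslope, abs_div, abs_of_pos (sub_pos.2 hst), div_le_iff₀ (sub_pos.2 hst)] at h

variable {d m : ℕ} {X : Fin m → (Fin d → ℝ) → (Fin d → ℝ)}

/-- Classical solutions of `∂_t ρ = σ Δ_G ρ + div_G (b ρ)` on `(0, T)` that are continuous up to
the end times. The drift enters only through the flux `b ρ`, which is required to be `C¹`. -/
structure IsFokkerPlanckSolution (X : Fin m → (Fin d → ℝ) → (Fin d → ℝ)) (σ T : ℝ)
    (b : ℝ → (Fin d → ℝ) → Fin m → ℝ) (ρ : ℝ → (Fin d → ℝ) → ℝ) : Prop where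
  continuousOn : ContinuousOn (fun p : ℝ × (Fin d → ℝ) => ρ p.1 p.2) (Icc 0 T ×ˢ univ)
  differentiableAt (x : Fin d → ℝ) (t : ℝ) (ht : t ∈ Ioo 0 T) :
    DifferentiableAt ℝ (fun s => ρ s x) t
  continuousOn_deriv : ContinuousOn (fun p : ℝ × (Fin d → ℝ) => deriv (fun s => ρ s p.2) p.1)
    (Ioo 0 T ×ˢ univ)
  contDiff (t : ℝ) (ht : t ∈ Ioo 0 T) : ContDiff ℝ 2 (ρ t)
  contDiff_flux (t : ℝ) (ht : t ∈ Ioo 0 T) (i : Fin m) : ContDiff ℝ 1 fun y => b t y i * ρ t y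
  deriv_eq (t : ℝ) (ht : t ∈ Ioo 0 T) (x : Fin d → ℝ) :
    deriv (fun s => ρ s x) t = fokkerPlanckOp X σ (b t) (ρ t) x

/-- `g` mollifies `φ` at scale `ε`: it is `ε`-close to `φ`, horizontally `1`-Lipschitz, and its
horizontal Laplacian is at most `1 / ε`. -/
structure IsHorizontalMollification (X : Fin m → (Fin d → ℝ) → (Fin d → ℝ))
    (φ : (Fin d → ℝ) → ℝ) (ε : ℝ) (g : (Fin d → ℝ) → ℝ) : Prop where
  contDiff : ContDiff ℝ 2 g
  bounded : ∃ K, ∀ x, |g x| ≤ K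
  abs_sub_le (x : Fin d → ℝ) : |φ x - g x| ≤ ε
  sqrt_hgradSq_le (x : Fin d → ℝ) : √(hgradSq X g x) ≤ 1
  abs_hLap_le (x : Fin d → ℝ) : |hLap X g x| ≤ 1 / ε

lemma continuous_of_isHorizontalMollification {φ : (Fin d → ℝ) → ℝ}
    (hφ : ∀ ε ∈ Ioc (0 : ℝ) 1, ∃ g, IsHorizontalMollification X φ ε g) : Continuous φ := by
  refine continuous_of_uniform_approx_of_continuous fun u hu => ?_
  obtain ⟨δ, hδ, hδu⟩ := Metric.mem_uniformity_dist.1 hu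
  obtain ⟨ε, hε, hεδ⟩ := exists_between (lt_min hδ one_pos)
  obtain ⟨g, hg⟩ := hφ ε ⟨hε, (hεδ.trans_le (min_le_right _ _)).le⟩
  exact ⟨g, hg.contDiff.continuous, fun x =>
    hδu ((hg.abs_sub_le x).trans_lt (hεδ.trans_le (min_le_left _ _)))⟩

lemma IsHorizontalMollification.abs_integral_mul_sub_le {φ g r : (Fin d → ℝ) → ℝ} {ε : ℝ}
    (hg : IsHorizontalMollification X φ ε g) (hφ : Continuous φ) (hr : Integrable r) :
    |(∫ x, φ x * r x) - ∫ x, g x * r x| ≤ ε * ∫ x, |r x| := by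
  obtain ⟨K, hK⟩ := hg.bounded
  have hgr : Integrable fun x => g x * r x :=
    hr.bdd_mul hg.contDiff.continuous.aestronglyMeasurable (ae_of_all _ hK)
  have hsub : Integrable fun x => (φ x - g x) * r x :=
    hr.bdd_mul (hφ.sub hg.contDiff.continuous).aestronglyMeasurable (ae_of_all _ hg.abs_sub_le)
  have hφr : Integrable fun x => φ x * r x := by
    simpa [sub_mul] using hsub.fun_add hgr
  rw [← integral_sub hφr hgr]
  simpa only [sub_mul] using abs_integral_mul_le hr hg.abs_sub_le

lemma IsHorizontalMollification.abs_kolmogorovOp_le {φ g : (Fin d → ℝ) → ℝ} {ε : ℝ}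
    (hg : IsHorizontalMollification X φ ε g) {σ : ℝ} (hσ : 0 ≤ σ)
    {b : (Fin d → ℝ) → Fin m → ℝ} {x : Fin d → ℝ} {M : ℝ} (hb : ∀ i, |b x i| ≤ M) :
    |kolmogorovOp X σ b g x| ≤ σ / ε + m * M := by
  simpa [div_eq_mul_inv] using abs_kolmogorovOp_le_add hσ (hg.abs_hLap_le x)
    (fun i => (abs_vderiv_le_sqrt_hgradSq X g x i).trans (hg.sqrt_hgradSq_le x)) hb

section Solution

variable {σ T N : ℝ} {b : ℝ → (Fin d → ℝ) → Fin m → ℝ} {ρ : ℝ → (Fin d → ℝ) → ℝ}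
  (hX : ∀ i, ContDiff ℝ 1 (X i)) (hXdiv : ∀ i x, ediv (X i) x = 0)
  (hρ : IsFokkerPlanckSolution X σ T b ρ)
  (hρint : ∀ t ∈ Icc 0 T, Integrable (ρ t)) (hN : ∀ t ∈ Icc 0 T, ∫ x, |ρ t x| ≤ N)
include hX hXdiv hρ

lemma IsFokkerPlanckSolution.hasDerivAt_integral_mul {ψ : (Fin d → ℝ) → ℝ}
    (hψ : ContDiff ℝ 2 ψ) (hc : HasCompactSupport ψ) {t : ℝ} (ht : t ∈ Ioo 0 T) :
    HasDerivAt (fun s => ∫ x, ψ x * ρ s x) (∫ x, kolmogorovOp X σ (b t) ψ x * ρ t x) t := by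
  have h := hasDerivAt_integral_mul_of_hasCompactSupport (μ := volume) isOpen_Ioo ht
    (fun s hs => (hρ.contDiff s hs).continuous) hρ.differentiableAt hρ.continuousOn_deriv
    hψ.continuous hc
  simp only [hρ.deriv_eq t ht] at h
  rwa [integral_mul_fokkerPlanckOp hX hXdiv hψ (hρ.contDiff t ht) (hρ.contDiff_flux t ht) hc] at h

include hρint hN

lemma IsFokkerPlanckSolution.abs_integral_sub_le_of_hasCompactSupport {ψ : (Fin d → ℝ) → ℝ}
    (hψ : ContDiff ℝ 2 ψ) (hc : HasCompactSupport ψ) {D : ℝ}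
    (hD : ∀ t ∈ Ioo 0 T, ∀ x, |kolmogorovOp X σ (b t) ψ x| ≤ D)
    {s t : ℝ} (hs : 0 ≤ s) (hst : s < t) (ht : t ≤ T) :
    |(∫ x, ψ x * ρ t x) - ∫ x, ψ x * ρ s x| ≤ D * N * (t - s) := by
  have hIoo {u : ℝ} (hu : u ∈ Ioo s t) : u ∈ Ioo 0 T := ⟨hs.trans_lt hu.1, hu.2.trans_le ht⟩
  have hcont : ContinuousOn (fun u => ∫ x, ψ x * ρ u x) (Icc 0 T) :=
    continuousOn_integral_of_compact_support hc
      (hψ.continuous.comp_continuousOn continuousOn_snd |>.mul hρ.continuousOn)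
      fun u x _ hx => by simp [image_eq_zero_of_notMem_tsupport hx]
  refine abs_sub_le_of_hasDerivAt hst (hcont.mono (Icc_subset_Icc hs ht))
    (fun u hu => hρ.hasDerivAt_integral_mul hX hXdiv hψ hc (hIoo hu)) fun u hu => ?_
  have hu' : u ∈ Icc 0 T := Ioo_subset_Icc_self (hIoo hu)
  exact (abs_integral_mul_le (hρint u hu') (hD u (hIoo hu))).trans
    (mul_le_mul_of_nonneg_left (hN u hu') ((abs_nonneg _).trans (hD u (hIoo hu) 0)))

variable {χ : ℕ → (Fin d → ℝ) → ℝ} {η : ℕ → ℝ} (hχ : IsHorizontalCutoff X χ η) {M : ℝ}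
  (hσ : 0 ≤ σ) (hb : ∀ t ∈ Ioo 0 T, ∀ x i, |b t x i| ≤ M)
include hχ hσ hb

lemma IsFokkerPlanckSolution.abs_integral_sub_le_of_bounded {g : (Fin d → ℝ) → ℝ}
    (hg : ContDiff ℝ 2 g) {D G K : ℝ} (hD : ∀ t ∈ Ioo 0 T, ∀ x, |kolmogorovOp X σ (b t) g x| ≤ D)
    (hG : ∀ i x, |vderiv (X i) g x| ≤ G) (hK : ∀ x, |g x| ≤ K)
    {s t : ℝ} (hs : 0 ≤ s) (hst : s < t) (ht : t ≤ T) :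
    |(∫ x, g x * ρ t x) - ∫ x, g x * ρ s x| ≤ D * N * (t - s) := by
  have hlim {u : ℝ} (hu : u ∈ Icc 0 T) :
      Tendsto (fun n => ∫ x, χ n x * g x * ρ u x) atTop (𝓝 (∫ x, g x * ρ u x)) := by
    simpa only [mul_assoc] using hχ.tendsto_integral_mul
      ((hρint u hu).bdd_mul hg.continuous.aestronglyMeasurable (ae_of_all _ hK))
  have hcutoff (n : ℕ) : |(∫ x, χ n x * g x * ρ t x) - ∫ x, χ n x * g x * ρ s x| ≤
      (D + η n * (K * (σ * m + m * M) + 2 * σ * (m * G))) * N * (t - s) :=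
    hρ.abs_integral_sub_le_of_hasCompactSupport hX hXdiv hρint hN ((hχ.contDiff n).mul hg)
      (hχ.hasCompactSupport n).mul_right (fun u hu x => hχ.abs_kolmogorovOp_mul_le n hX hσ hg
        (hD u hu x) (hG · x) (hK x) (hb u hu x)) hs hst ht
  have hbound : Tendsto (fun n => (D + η n * (K * (σ * m + m * M) + 2 * σ * (m * G))) * N * (t - s))
      atTop (𝓝 (D * N * (t - s))) := by
    simpa using (((hχ.tendsto_zero.mul_const _).const_add D).mul_const N).mul_const (t - s)
  exact le_of_tendsto_of_tendsto'
    ((hlim ⟨hs.trans hst.le, ht⟩).sub (hlim ⟨hs, hst.le.trans ht⟩)).abs hbound hcutoff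

lemma IsFokkerPlanckSolution.abs_integral_sub_le_of_mollification {φ g : (Fin d → ℝ) → ℝ} {ε : ℝ}
    (hφ : Continuous φ) (hg : IsHorizontalMollification X φ ε g)
    {s t : ℝ} (hs : 0 ≤ s) (hst : s < t) (ht : t ≤ T) :
    |(∫ x, φ x * ρ t x) - ∫ x, φ x * ρ s x| ≤ N * (2 * ε + (σ / ε + m * M) * (t - s)) := by
  obtain ⟨K, hK⟩ := hg.bounded
  have happrox {u : ℝ} (hu : u ∈ Icc 0 T) :
      |(∫ x, φ x * ρ u x) - ∫ x, g x * ρ u x| ≤ ε * N :=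
    (hg.abs_integral_mul_sub_le hφ (hρint u hu)).trans
      (mul_le_mul_of_nonneg_left (hN u hu) ((abs_nonneg _).trans (hg.abs_sub_le 0)))
  have hsmooth : |(∫ x, g x * ρ t x) - ∫ x, g x * ρ s x| ≤ (σ / ε + m * M) * N * (t - s) :=
    hρ.abs_integral_sub_le_of_bounded hX hXdiv hρint hN hχ hσ hb hg.contDiff
      (fun u hu x => hg.abs_kolmogorovOp_le hσ (hb u hu x))
      (fun i x => (abs_vderiv_le_sqrt_hgradSq X g x i).trans (hg.sqrt_hgradSq_le x)) hK hs hst ht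
  have ht' := happrox ⟨hs.trans hst.le, ht⟩
  have hs' := happrox ⟨hs, hst.le.trans ht⟩
  rw [abs_sub_le_iff] at *
  constructor <;> linarith [ht'.1, ht'.2, hs'.1, hs'.2, hsmooth.1, hsmooth.2]

end Solution

end TimeDependence

lemma exists_mollification_scale {σ A T h : ℝ} (hA : 0 ≤ A) (hh : 0 < h) (hhT : h ≤ T) :
    ∃ ε ∈ Ioc (0 : ℝ) 1,
      2 * ε + (σ / ε + A) * h ≤ (2 + σ * (1 + √T) + A * √T) * √h := by
  have hpos : 0 < √h := Real.sqrt_pos.2 hh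
  have hle : √h ≤ √T := Real.sqrt_le_sqrt hhT
  have hsq : √h * √h = h := Real.mul_self_sqrt hh.le
  have hT : 0 < 1 + √T := by positivity
  refine ⟨√h / (1 + √T), ⟨by positivity, (div_le_one hT).2 (by linarith)⟩, ?_⟩
  have herror : √h / (1 + √T) ≤ √h := div_le_self hpos.le (by linarith)
  have hdiffusion : σ / (√h / (1 + √T)) * h = σ * (1 + √T) * √h := by
    field_simp
    rw [sq, hsq]
  have hdrift : A * h ≤ A * (√T * √h) :=
    mul_le_mul_of_nonneg_left (hsq.ge.trans (mul_le_mul_of_nonneg_right hle hpos.le)) hA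
  linarith

theorem fokkerPlanck_flat_metric_holder_general {d m : ℕ}
    {X : Fin m → (Fin d → ℝ) → (Fin d → ℝ)} (hX : ∀ i, ContDiff ℝ 1 (X i))
    (hXdiv : ∀ i x, ediv (X i) x = 0) {χ : ℕ → (Fin d → ℝ) → ℝ} {η : ℕ → ℝ}
    (hχ : IsHorizontalCutoff X χ η) {σ T M N : ℝ} (hσ : 0 ≤ σ) (hM : 0 ≤ M)
    {b : ℝ → (Fin d → ℝ) → Fin m → ℝ} {ρ : ℝ → (Fin d → ℝ) → ℝ} {φ : (Fin d → ℝ) → ℝ}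
    (hb : ∀ t ∈ Ioo 0 T, ∀ x i, |b t x i| ≤ M) (hρ : IsFokkerPlanckSolution X σ T b ρ)
    (hρint : ∀ t ∈ Icc 0 T, Integrable (ρ t)) (hN : ∀ t ∈ Icc 0 T, ∫ x, |ρ t x| ≤ N)
    (hφ : ∀ ε ∈ Ioc (0 : ℝ) 1, ∃ g, IsHorizontalMollification X φ ε g)
    {s t : ℝ} (hs : s ∈ Icc 0 T) (ht : t ∈ Icc 0 T) :
    |(∫ x, φ x * ρ t x) - ∫ x, φ x * ρ s x| ≤
      N * (2 + σ * (1 + √T) + m * M * √T) * |t - s| ^ ((1 : ℝ) / 2) := by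
  wlog hst : s ≤ t generalizing s t
  · rw [abs_sub_comm, abs_sub_comm t]
    exact this ht hs (le_of_not_ge hst)
  obtain rfl | hst := hst.eq_or_lt
  · simp
  obtain ⟨ε, hε, hscale⟩ := exists_mollification_scale (σ := σ) (A := m * M) (by positivity)
    (sub_pos.2 hst) (show t - s ≤ T by linarith [hs.1, ht.2])
  obtain ⟨g, hg⟩ := hφ ε hε
  have hN0 : 0 ≤ N := (integral_nonneg fun x => abs_nonneg (ρ s x)).trans (hN s hs)
  rw [abs_of_pos (sub_pos.2 hst), ← Real.sqrt_eq_rpow, mul_assoc]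
  exact (hρ.abs_integral_sub_le_of_mollification hX hXdiv hρint hN hχ hσ hb
    (continuous_of_isHorizontalMollification hφ) hg hs.1 hst ht.2).trans
    (mul_le_mul_of_nonneg_left hscale hN0)

/-- Hölder continuity in time of the solution of the Fokker–Planck
equation with respect to the flat (Fortet–Mourier) metric:  there is a constant `C`,
depending only on `σ`, `T` and the sup norm bound `Mb` of the drift (and on the fixed
family of vector fields), such that for every probability solution `ρ`, every `φ` with
`‖φ‖_∞ ≤ 1` admitting a mollified family `(φ_ε)`, and all `s, t ∈ [0,T]`,
`|∫ φ ρ(t) − ∫ φ ρ(s)| ≤ C |t − s|^{1/2}`. -/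
theorem fokkerPlanck_flat_metric_holder {d m : ℕ} (hd : 0 < d) (hm : 0 < m)
    (w : Fin d → ℕ) (hw : ∀ i, 0 < w i)
    (X : Fin m → (Fin d → ℝ) → (Fin d → ℝ)) (hXsm : ∀ i, ContDiff ℝ (⊤ : ℕ∞) (X i))
    (hXdivfree : ∀ i x, ediv (X i) x = 0)
    (hXhom : ∀ i, homogOne w (X i))
    (σ T Mb : ℝ) (hσ : 0 < σ) (hT : 0 < T) :
    ∃ C : ℝ, 0 ≤ C ∧
      ∀ (b : ℝ → (Fin d → ℝ) → Fin m → ℝ) (ρ : ℝ → (Fin d → ℝ) → ℝ) (Mρ : ℝ)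
        (φ : (Fin d → ℝ) → ℝ) (φε : ℝ → (Fin d → ℝ) → ℝ),
        Continuous (fun p : ℝ × (Fin d → ℝ) => b p.1 p.2) →
        (∀ t ∈ Set.Icc (0:ℝ) T, ∀ x i, |b t x i| ≤ Mb) →
        (∀ t ∈ Set.Icc (0:ℝ) T, ∀ i, ContDiff ℝ 1 (fun y => b t y i)) →
        ContinuousOn (fun p : ℝ × (Fin d → ℝ) => ρ p.1 p.2) (Set.Icc 0 T ×ˢ Set.univ) →
        (∀ t x, 0 ≤ ρ t x) →
        (∀ t ∈ Set.Icc (0:ℝ) T, ∀ x, |ρ t x| ≤ Mρ) →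
        (∀ (x : Fin d → ℝ), ∀ t ∈ Set.Ioo (0:ℝ) T, DifferentiableAt ℝ (fun s => ρ s x) t) →
        (∀ t ∈ Set.Ioo (0:ℝ) T, ContDiff ℝ 2 (ρ t)) →
        ContinuousOn (fun p : ℝ × (Fin d → ℝ) => deriv (fun s => ρ s p.2) p.1)
          (Set.Ioo 0 T ×ˢ Set.univ) →
        (∀ i, ContinuousOn (fun p : ℝ × (Fin d → ℝ) => vderiv (X i) (ρ p.1) p.2)
          (Set.Ioo 0 T ×ˢ Set.univ)) →
        (∀ i i', ContinuousOn
          (fun p : ℝ × (Fin d → ℝ) => vderiv (X i) (vderiv (X i') (ρ p.1)) p.2)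
          (Set.Ioo 0 T ×ˢ Set.univ)) →
        (∀ t ∈ Set.Ioo (0:ℝ) T, ∀ x,
          deriv (fun s => ρ s x) t
            = σ * hLap X (ρ t) x + hdiv X (fun y i => b t y i * ρ t y) x) →
        (∀ t ∈ Set.Icc (0:ℝ) T, (∫ x : Fin d → ℝ, ρ t x) = 1) →
        (∀ x, |φ x| ≤ 1) →
        (∀ ε ∈ Set.Ioc (0:ℝ) 1,
          ContDiff ℝ 2 (φε ε) ∧ (∃ Mφ : ℝ, ∀ x, |φε ε x| ≤ Mφ) ∧
          (∀ x, |φ x - φε ε x| ≤ ε) ∧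
          (∀ x, Real.sqrt (hgradSq X (φε ε) x) ≤ 1) ∧
          (∀ x, |hLap X (φε ε) x| ≤ 1 / ε)) →
        ∀ s ∈ Set.Icc (0:ℝ) T, ∀ t ∈ Set.Icc (0:ℝ) T,
          |(∫ x : Fin d → ℝ, φ x * ρ t x) - ∫ x : Fin d → ℝ, φ x * ρ s x|
            ≤ C * |t - s| ^ ((1:ℝ)/2) := by
  obtain ⟨χ, η, hχ⟩ := exists_isHorizontalCutoff hw (fun i => (hXsm i).of_le (by simp)) hXhom
  refine ⟨1 * (2 + σ * (1 + √T) + m * |Mb| * √T), by positivity, ?_⟩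
  intro b ρ Mρ φ φε _ hbM hb hρ hρ0 _ hρt hρ2 hρt' _ _ heq hmass _ hφ s hs t ht
  have hsol : IsFokkerPlanckSolution X σ T b ρ :=
    { continuousOn := hρ
      differentiableAt := hρt
      continuousOn_deriv := hρt'
      contDiff := hρ2
      contDiff_flux := fun t ht i =>
        (hb t (Ioo_subset_Icc_self ht) i).mul ((hρ2 t ht).of_le one_le_two)
      deriv_eq := heq }
  exact fokkerPlanck_flat_metric_holder_general (fun i => (hXsm i).of_le (by simp)) hXdivfree hχ
    hσ.le (abs_nonneg Mb)
    (fun t ht x i => (hbM t (Ioo_subset_Icc_self ht) x i).trans (le_abs_self Mb)) hsol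
    (fun t ht => .of_integral_ne_zero (by simp [hmass t ht]))
    (fun t ht => by simp only [abs_of_nonneg (hρ0 t _), hmass t ht, le_refl])
    (fun ε hε => let ⟨h2, hbdd, hclose, hgrad, hlap⟩ := hφ ε hε
      ⟨φε ε, h2, hbdd, hclose, hgrad, hlap⟩) hs ht
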